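/- Let ω be a measurement function, V a finite-step control Lyapunov function for time step M with decay function α (α ∈ K∞, α(s) < s for s > 0) and associated afcl q. Let q̂ : X → U^M be a map such that for every ξ ∈ X: all components of q̂(ξ) lie in U; g^j(ξ, q̂(ξ)) ∈ X for j = 1,…,M; V(g^M(ξ, q̂(ξ))) ≤ α(V(ξ)); and Σ_{i=0}^{M−1} V(x(i,ξ,q̂(ξ))) ≤ Σ_{i=0}^{M−1} V(x(i,ξ,q(ξ))). Then q̂ is an admissible finite-step feedback control law and q̂ asymptotically ω-stabilizes the set A := ω⁻¹(0): there exists a class-KL function β such that ω(x_{q̂}(t,ξ)) ≤ β(ω(ξ), t) for all ξ ∈ X and t ∈ ℕ. -/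

import Mathlib

open Filter Finset NNReal

noncomputable section

/-- A class-K function on `[0,∞)`: continuous, strictly increasing, zero at zero. -/
def ClassK (κ : ℝ≥0 → ℝ≥0) : Prop :=
  Continuous κ ∧ StrictMono κ ∧ κ 0 = 0

/-- A class-K∞ function: class K and unbounded. -/
def ClassKInf (κ : ℝ≥0 → ℝ≥0) : Prop :=
  ClassK κ ∧ Filter.Tendsto κ Filter.atTop Filter.atTop

/-- A class-KL function. -/
def ClassKL (β : ℝ≥0 → ℝ≥0 → ℝ≥0) : Prop :=
  Continuous (fun p : ℝ≥0 × ℝ≥0 => β p.1 p.2) ∧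
  (∀ s : ℝ≥0, ClassK fun r => β r s) ∧
  (∀ r : ℝ≥0, Antitone (fun s => β r s) ∧
    Filter.Tendsto (fun s => β r s) Filter.atTop (nhds 0))

/-- The iterates `g^j(ξ, u)` of the control system `x⁺ = g(x,u)` under the
control sequence `u` starting from `ξ`. -/
def iter {n m : ℕ} (g : (Fin n → ℝ) → (Fin m → ℝ) → (Fin n → ℝ)) (ξ : Fin n → ℝ)
    (u : ℕ → Fin m → ℝ) : ℕ → Fin n → ℝ
  | 0 => ξ
  | j + 1 => g (iter g ξ u j) (u j)

/-- `q : X → U^M` is an admissible finite-step feedback control law (afcl) of length `M`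
for the system `g` with state constraint set `X`, input constraint set `U` and
measurement function `ω`. -/
def IsAfcl {n m : ℕ} (ω : (Fin n → ℝ) → ℝ≥0) (X : Set (Fin n → ℝ)) (U : Set (Fin m → ℝ))
    (g : (Fin n → ℝ) → (Fin m → ℝ) → (Fin n → ℝ)) (M : ℕ)
    (q : (Fin n → ℝ) → ℕ → Fin m → ℝ) : Prop :=
  (∀ ξ ∈ X, ∀ j < M, q ξ j ∈ U) ∧
  (∀ ξ ∈ X, ∀ j : ℕ, 1 ≤ j → j ≤ M → iter g ξ (q ξ) j ∈ X) ∧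
  (∀ j : ℕ, 1 ≤ j → j ≤ M → ∃ κ : ℝ≥0 → ℝ≥0, ClassK κ ∧
    ∀ ξ ∈ X, ω (iter g ξ (q ξ) j) ≤ κ (ω ξ))

/-- States of the closed loop under the `M`-step feedback `q` at time instants `kM`. -/
def loopBase {n m : ℕ} (g : (Fin n → ℝ) → (Fin m → ℝ) → (Fin n → ℝ)) (M : ℕ)
    (q : (Fin n → ℝ) → ℕ → Fin m → ℝ) (ξ : Fin n → ℝ) : ℕ → Fin n → ℝ
  | 0 => ξ
  | k + 1 => iter g (loopBase g M q ξ k) (q (loopBase g M q ξ k)) M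

/-- The closed-loop trajectory `x_q(t, ξ)`: for `t = kM + j`, `j ∈ {0,…,M-1}`,
`x_q(kM + j) = g^j(x_q(kM), q(x_q(kM)))`. -/
def closedLoop {n m : ℕ} (g : (Fin n → ℝ) → (Fin m → ℝ) → (Fin n → ℝ)) (M : ℕ)
    (q : (Fin n → ℝ) → ℕ → Fin m → ℝ) (ξ : Fin n → ℝ) (t : ℕ) : Fin n → ℝ :=
  iter g (loopBase g M q ξ (t / M)) (q (loopBase g M q ξ (t / M))) (t % M)

/-!
The cost of the comparison law `q` over one period is at most a class-K function of `ω ξ`, and so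
is the cost of `q̂`. Each `V (x(i, ξ, q̂(ξ)))` is a single summand of that cost, which bounds the
intermediate states and makes `q̂` an afcl.

At the times `kM` the contraction gives `V ≤ α^[k] (V ξ)`, and `α^[k] v → 0` because the limit is a
fixed point of `α`. Passing from `V` to `ω` and across one period costs only class-K functions, so
`ω (x(t)) ≤ f t (ω ξ)` with `f t` of class K and `t ↦ f t r` decreasing to `0`. Interpolating
linearly in `t` turns this sequence into a class-KL function with the same values at integers.
-/

section LinearInterp

theorem mem_Icc_natFloor {R : Type*} [Semiring R] [LinearOrder R] [IsStrictOrderedRing R]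
    [FloorSemiring R] {s : R} (hs : 0 ≤ s) : s ∈ Set.Icc (⌊s⌋₊ : R) (⌊s⌋₊ + 1) :=
  ⟨Nat.floor_le hs, (Nat.lt_floor_add_one s).le⟩

theorem locallyFinite_Icc_natCast {R : Type*} [Semiring R] [LinearOrder R] [IsStrictOrderedRing R]
    [Archimedean R] [TopologicalSpace R] [OrderTopology R] :
    LocallyFinite fun k : ℕ => Set.Icc (k : R) (k + 1) := by
  intro s
  obtain ⟨N, hN⟩ := exists_nat_gt s
  refine ⟨Set.Iio (N : R), Iio_mem_nhds hN, (Set.finite_lt_nat N).subset ?_⟩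
  rintro k ⟨t, ht, htN⟩
  exact Nat.cast_lt.1 (ht.1.trans_lt htN)

/-- The piecewise linear interpolation of a sequence `f`, as a function of a nonnegative real time.
Both truncated subtractions are exact, since `⌊s⌋₊ ≤ s < ⌊s⌋₊ + 1`. -/
def linearInterp {E : Type*} [AddCommMonoid E] [Module ℝ≥0 E] (f : ℕ → E) (s : ℝ≥0) : E :=
  ((⌊s⌋₊ : ℝ≥0) + 1 - s) • f ⌊s⌋₊ + (s - (⌊s⌋₊ : ℝ≥0)) • f (⌊s⌋₊ + 1)

section Module

variable {E : Type*} [AddCommMonoid E] [Module ℝ≥0 E] {f : ℕ → E}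

theorem linearInterp_natCast (f : ℕ → E) (k : ℕ) : linearInterp f k = f k := by
  simp [linearInterp]

theorem linearInterp_eq_of_mem_Icc {s : ℝ≥0} {k : ℕ} (hs : s ∈ Set.Icc (k : ℝ≥0) (k + 1)) :
    linearInterp f s = ((k : ℝ≥0) + 1 - s) • f k + (s - (k : ℝ≥0)) • f (k + 1) := by
  rcases hs.2.lt_or_eq with hlt | rfl
  · rw [linearInterp, (Nat.floor_eq_iff zero_le).2 ⟨hs.1, hlt⟩]
  · rw [← Nat.cast_succ, linearInterp_natCast]
    simp

theorem smul_add_smul_eq_of_mem_Icc {s c : ℝ≥0} (hs : s ∈ Set.Icc c (c + 1)) (x : E) :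
    (c + 1 - s) • x + (s - c) • x = x := by
  rw [← add_smul, tsub_add_tsub_cancel hs.2 hs.1, add_tsub_cancel_left, one_smul]

end Module

section Order

variable {E : Type*} [AddCommMonoid E] [PartialOrder E] [Module ℝ≥0 E] {f g : ℕ → E}

theorem linearInterp_lt_linearInterp [IsOrderedCancelAddMonoid E] [PosSMulStrictMono ℝ≥0 E]
    (hfg : ∀ k, f k < g k) (s : ℝ≥0) : linearInterp f s < linearInterp g s :=
  add_lt_add_of_lt_of_le
    (smul_lt_smul_of_pos_left (hfg _) (tsub_pos_of_lt (Nat.lt_floor_add_one s)))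
    (smul_le_smul_of_nonneg_left (hfg _).le zero_le)

variable [IsOrderedAddMonoid E] [PosSMulMono ℝ≥0 E]

theorem linearInterp_le_of_antitone (hf : Antitone f) (s : ℝ≥0) :
    linearInterp f s ≤ f ⌊s⌋₊ :=
  calc linearInterp f s
      ≤ ((⌊s⌋₊ : ℝ≥0) + 1 - s) • f ⌊s⌋₊ + (s - (⌊s⌋₊ : ℝ≥0)) • f ⌊s⌋₊ := by
        unfold linearInterp
        gcongr
        exact hf (Nat.le_succ _)
    _ = f ⌊s⌋₊ := smul_add_smul_eq_of_mem_Icc (mem_Icc_natFloor zero_le) _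

theorem le_linearInterp_of_antitone (hf : Antitone f) (s : ℝ≥0) :
    f (⌊s⌋₊ + 1) ≤ linearInterp f s :=
  calc f (⌊s⌋₊ + 1)
      = ((⌊s⌋₊ : ℝ≥0) + 1 - s) • f (⌊s⌋₊ + 1) + (s - (⌊s⌋₊ : ℝ≥0)) • f (⌊s⌋₊ + 1) :=
        (smul_add_smul_eq_of_mem_Icc (mem_Icc_natFloor zero_le) _).symm
    _ ≤ linearInterp f s := by
        unfold linearInterp
        gcongr
        exact hf (Nat.le_succ _)

theorem antitone_linearInterp (hf : Antitone f) : Antitone (linearInterp f) := by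
  intro s t hst
  have hs := mem_Icc_natFloor (zero_le (a := s))
  rcases (Nat.floor_mono hst).lt_or_eq with hfloor | hfloor
  · calc linearInterp f t ≤ f ⌊t⌋₊ := linearInterp_le_of_antitone hf t
      _ ≤ f (⌊s⌋₊ + 1) := hf hfloor
      _ ≤ linearInterp f s := le_linearInterp_of_antitone hf s
  · have ht : t ∈ Set.Icc (⌊s⌋₊ : ℝ≥0) (⌊s⌋₊ + 1) := hfloor ▸ mem_Icc_natFloor zero_le
    set k := ⌊s⌋₊
    -- Going from `s` to `t` shifts the weight `t - s` from `f k` to the smaller `f (k + 1)`.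
    calc linearInterp f t
        = ((k : ℝ≥0) + 1 - t) • f k + (t - (k : ℝ≥0)) • f (k + 1) := linearInterp_eq_of_mem_Icc ht
      _ = ((k : ℝ≥0) + 1 - t) • f k + (t - s) • f (k + 1) + (s - (k : ℝ≥0)) • f (k + 1) := by
        rw [← tsub_add_tsub_cancel hst hs.1, add_smul, add_assoc]
      _ ≤ ((k : ℝ≥0) + 1 - t) • f k + (t - s) • f k + (s - (k : ℝ≥0)) • f (k + 1) := by
        gcongr
        exact hf k.le_succ
      _ = linearInterp f s := by
        rw [← add_smul, tsub_add_tsub_cancel ht.2 hst]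
        rfl

theorem tendsto_linearInterp_atTop_of_antitone [TopologicalSpace E] [OrderTopology E]
    (hf : Antitone f) {a : E} (ha : Tendsto f atTop (nhds a)) :
    Tendsto (linearInterp f) atTop (nhds a) :=
  tendsto_of_tendsto_of_tendsto_of_le_of_le
    ((ha.comp (tendsto_add_atTop_nat 1)).comp tendsto_nat_floor_atTop)
    (ha.comp tendsto_nat_floor_atTop)
    (le_linearInterp_of_antitone hf) (linearInterp_le_of_antitone hf)

end Order

theorem continuous_linearInterp {Y E : Type*} [TopologicalSpace Y] [TopologicalSpace E]
    [AddCommMonoid E] [Module ℝ≥0 E] [ContinuousAdd E] [ContinuousSMul ℝ≥0 E] {f : ℕ → Y → E}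
    (hf : ∀ k, Continuous (f k)) :
    Continuous fun p : Y × ℝ≥0 => linearInterp (fun k => f k p.1) p.2 := by
  refine (locallyFinite_Icc_natCast.preimage_continuous continuous_snd).continuous
    (Set.iUnion_eq_univ_iff.2 fun p => ⟨⌊p.2⌋₊, mem_Icc_natFloor zero_le⟩)
    (fun k => isClosed_Icc.preimage continuous_snd) fun k => ?_
  have hpiece : Continuous fun p : Y × ℝ≥0 =>
      ((k : ℝ≥0) + 1 - p.2) • f k p.1 + (p.2 - (k : ℝ≥0)) • f (k + 1) p.1 := by
    fun_prop
  exact hpiece.continuousOn.congr fun p hp => linearInterp_eq_of_mem_Icc hp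

end LinearInterp

theorem tendsto_iterate_nhds_bot {E : Type*} [ConditionallyCompleteLinearOrderBot E]
    [TopologicalSpace E] [OrderTopology E] {f : E → E} (hf : Continuous f) (hle : f ≤ id)
    (hfix : ∀ x, Function.IsFixedPt f x → x = ⊥) (x : E) :
    Tendsto (fun k => f^[k] x) atTop (nhds ⊥) := by
  have hlim := tendsto_atTop_ciInf (fun _ _ h => Function.antitone_iterate_of_le_id hle h x)
    (OrderBot.bddBelow _)
  rwa [hfix _ (isFixedPt_of_tendsto_iterate hlim hf.continuousAt)] at hlim

namespace ClassK

variable {κ η : ℝ≥0 → ℝ≥0}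

protected theorem id : ClassK id :=
  ⟨continuous_id, strictMono_id, rfl⟩

theorem comp (hκ : ClassK κ) (hη : ClassK η) : ClassK (κ ∘ η) :=
  ⟨hκ.1.comp hη.1, hκ.2.1.comp hη.2.1, by rw [Function.comp_apply, hη.2.2, hκ.2.2]⟩

theorem add (hκ : ClassK κ) (hη : ClassK η) : ClassK (κ + η) :=
  ⟨hκ.1.add hη.1, hκ.2.1.add hη.2.1, by rw [Pi.add_apply, hκ.2.2, hη.2.2, add_zero]⟩

theorem iterate (hκ : ClassK κ) (k : ℕ) : ClassK κ^[k] :=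
  ⟨hκ.1.iterate k, hκ.2.1.iterate k, Function.iterate_fixed hκ.2.2 k⟩

theorem tendsto_comp_zero {ι : Type*} {l : Filter ι} {u : ι → ℝ≥0} (hκ : ClassK κ)
    (hu : Tendsto u l (nhds 0)) : Tendsto (fun i => κ (u i)) l (nhds 0) :=
  hκ.2.2 ▸ (hκ.1.tendsto 0).comp hu

protected theorem linearInterp {f : ℕ → ℝ≥0 → ℝ≥0} (hf : ∀ k, ClassK (f k)) (s : ℝ≥0) :
    ClassK fun r => linearInterp (fun k => f k r) s := by
  refine ⟨?_, fun _ _ hab => linearInterp_lt_linearInterp (fun k => (hf k).2.1 hab) s, ?_⟩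
  · have hcont := fun k => (hf k).1
    unfold linearInterp
    fun_prop
  · simp [linearInterp, (hf _).2.2]

theorem le_id_of_lt_self (hκ : ClassK κ) (hlt : ∀ s, 0 < s → κ s < s) : κ ≤ id := by
  intro s
  rcases eq_zero_or_pos s with rfl | hs
  · exact hκ.2.2.le
  · exact (hlt s hs).le

theorem tendsto_iterate_zero (hκ : ClassK κ) (hlt : ∀ s, 0 < s → κ s < s) (v : ℝ≥0) :
    Tendsto (fun k => κ^[k] v) atTop (nhds 0) :=
  tendsto_iterate_nhds_bot hκ.1 (hκ.le_id_of_lt_self hlt)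
    (fun s hs => by_contra fun hne => (hlt s (pos_iff_ne_zero.2 hne)).ne hs) v

end ClassK

theorem ClassKInf.exists_classK_leftInverse {κ : ℝ≥0 → ℝ≥0} (hκ : ClassKInf κ) :
    ∃ η, ClassK η ∧ Function.LeftInverse η κ := by
  obtain ⟨⟨hcont, hmono, hzero⟩, htop⟩ := hκ
  have hsurj : Function.Surjective κ := fun y =>
    mem_range_of_exists_le_of_exists_ge hcont ⟨0, hzero.trans_le zero_le⟩
      (htop.eventually_ge_atTop y).exists
  let e := hmono.orderIsoOfSurjective κ hsurj
  exact ⟨e.symm, ⟨e.symm.continuous, e.symm.strictMono, map_bot e.symm⟩, e.symm_apply_apply⟩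

theorem exists_classKL_natCast_eq {f : ℕ → ℝ≥0 → ℝ≥0} (hf : ∀ k, ClassK (f k))
    (hanti : ∀ r, Antitone fun k => f k r) (hlim : ∀ r, Tendsto (fun k => f k r) atTop (nhds 0)) :
    ∃ β, ClassKL β ∧ ∀ r (k : ℕ), β r k = f k r :=
  ⟨fun r => linearInterp fun k => f k r,
    ⟨continuous_linearInterp fun k => (hf k).1, .linearInterp hf, fun r =>
      ⟨antitone_linearInterp (hanti r), tendsto_linearInterp_atTop_of_antitone (hanti r) (hlim r)⟩⟩,
    fun _ => linearInterp_natCast _⟩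

/-- `ψ` is bounded on `X` by a class-K function of `φ`. The comparison functions in the bounds
`ulα (ω ξ) ≤ V ξ`, `V ξ ≤ olα (ω ξ)` and `ω (g^j(ξ, q(ξ))) ≤ κ_j (ω ξ)` enter the argument only
through this relation. -/
def ClassKDominated {E : Type*} (X : Set E) (ψ φ : E → ℝ≥0) : Prop :=
  ∃ κ : ℝ≥0 → ℝ≥0, ClassK κ ∧ ∀ x ∈ X, ψ x ≤ κ (φ x)

namespace ClassKDominated

variable {E : Type*} {X : Set E} {χ ψ φ : E → ℝ≥0}

theorem of_le (h : ∀ x ∈ X, ψ x ≤ φ x) : ClassKDominated X ψ φ :=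
  ⟨id, ClassK.id, h⟩

theorem trans (h : ClassKDominated X χ ψ) (h' : ClassKDominated X ψ φ) :
    ClassKDominated X χ φ := by
  obtain ⟨κ, hκ, hχ⟩ := h
  obtain ⟨η, hη, hψ⟩ := h'
  exact ⟨κ ∘ η, hκ.comp hη, fun x hx => (hχ x hx).trans (hκ.2.1.monotone (hψ x hx))⟩

theorem comp_mapsTo {E' : Type*} {Y : Set E'} {F : E' → E} (h : ClassKDominated X ψ φ)
    (hF : Set.MapsTo F Y X) : ClassKDominated Y (ψ ∘ F) (φ ∘ F) :=
  let ⟨κ, hκ, hψ⟩ := h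
  ⟨κ, hκ, fun _ hy => hψ _ (hF hy)⟩

theorem add (h : ClassKDominated X χ φ) (h' : ClassKDominated X ψ φ) :
    ClassKDominated X (χ + ψ) φ :=
  let ⟨κ, hκ, hχ⟩ := h
  let ⟨η, hη, hψ⟩ := h'
  ⟨κ + η, hκ.add hη, fun x hx => add_le_add (hχ x hx) (hψ x hx)⟩

theorem sum {ι : Type*} {s : Finset ι} {ψ : ι → E → ℝ≥0}
    (h : ∀ i ∈ s, ClassKDominated X (ψ i) φ) :
    ClassKDominated X (fun x => ∑ i ∈ s, ψ i x) φ := by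
  simpa only [← Finset.sum_apply] using
    Finset.sum_induction ψ (ClassKDominated X · φ) (fun _ _ => add) (of_le fun _ _ => zero_le) h

end ClassKDominated

theorem ClassKInf.classKDominated {E : Type*} {X : Set E} {ψ φ : E → ℝ≥0} {κ : ℝ≥0 → ℝ≥0}
    (hκ : ClassKInf κ) (h : ∀ x ∈ X, κ (ψ x) ≤ φ x) : ClassKDominated X ψ φ := by
  obtain ⟨η, hη, hleft⟩ := hκ.exists_classK_leftInverse
  exact ⟨η, hη, fun x hx => (hleft (ψ x)).symm.trans_le (hη.2.1.monotone (h x hx))⟩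

section ControlSystem

variable {n m M : ℕ} {X : Set (Fin n → ℝ)} {U : Set (Fin m → ℝ)}
  {g : (Fin n → ℝ) → (Fin m → ℝ) → (Fin n → ℝ)} {ω V : (Fin n → ℝ) → ℝ≥0} {α : ℝ≥0 → ℝ≥0}
  {q : (Fin n → ℝ) → ℕ → Fin m → ℝ}

theorem loopBase_mem (hX : ∀ ξ ∈ X, iter g ξ (q ξ) M ∈ X) {ξ : Fin n → ℝ} (hξ : ξ ∈ X) :
    ∀ k, loopBase g M q ξ k ∈ X
  | 0 => hξ
  | k + 1 => hX _ (loopBase_mem hX hξ k)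

theorem apply_loopBase_le_iterate {R : Type*} [Preorder R] {W : (Fin n → ℝ) → R} {a : R → R}
    (ha : Monotone a) (hX : ∀ ξ ∈ X, iter g ξ (q ξ) M ∈ X)
    (hcontr : ∀ ξ ∈ X, W (iter g ξ (q ξ) M) ≤ a (W ξ)) {ξ : Fin n → ℝ} (hξ : ξ ∈ X) (k : ℕ) :
    W (loopBase g M q ξ k) ≤ a^[k] (W ξ) := by
  induction k with
  | zero => exact le_rfl
  | succ k ih =>
    rw [Function.iterate_succ_apply']
    exact (hcontr _ (loopBase_mem hX hξ k)).trans (ha ih)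

namespace IsAfcl

theorem iter_mem (hq : IsAfcl ω X U g M q) {j : ℕ} (hj : j ≤ M) {ξ : Fin n → ℝ} (hξ : ξ ∈ X) :
    iter g ξ (q ξ) j ∈ X := by
  rcases Nat.eq_zero_or_pos j with rfl | hpos
  · exact hξ
  · exact hq.2.1 ξ hξ j hpos hj

theorem classKDominated_iter (hq : IsAfcl ω X U g M q) {j : ℕ} (hj : j ≤ M) :
    ClassKDominated X (fun ξ => ω (iter g ξ (q ξ) j)) ω := by
  rcases Nat.eq_zero_or_pos j with rfl | hpos
  · exact .of_le fun _ _ => le_rfl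
  · exact hq.2.2 j hpos hj

theorem exists_classK_forall_iter_le (hq : IsAfcl ω X U g M q) :
    ∃ κ, ClassK κ ∧ ∀ ξ ∈ X, ∀ j < M, ω (iter g ξ (q ξ) j) ≤ κ (ω ξ) := by
  obtain ⟨κ, hκ, hsum⟩ := ClassKDominated.sum (s := Finset.range M) fun j hj =>
    hq.classKDominated_iter (Finset.mem_range.1 hj).le
  refine ⟨κ, hκ, fun ξ hξ j hj => le_trans ?_ (hsum ξ hξ)⟩
  exact Finset.single_le_sum (f := fun i => ω (iter g ξ (q ξ) i)) (fun _ _ => zero_le)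
    (Finset.mem_range.2 hj)

theorem classKDominated_cost (hq : IsAfcl ω X U g M q) (hup : ClassKDominated X V ω) :
    ClassKDominated X (fun ξ => ∑ i ∈ Finset.range M, V (iter g ξ (q ξ) i)) ω :=
  .sum fun _ hi =>
    have hiM := (Finset.mem_range.1 hi).le
    (hup.comp_mapsTo fun _ => hq.iter_mem hiM).trans (hq.classKDominated_iter hiM)

theorem of_classKDominated_cost (hlow : ClassKDominated X ω V) (hup : ClassKDominated X V ω)
    (hα : ClassK α) (hU : ∀ ξ ∈ X, ∀ j < M, q ξ j ∈ U)
    (hX : ∀ ξ ∈ X, ∀ j : ℕ, 1 ≤ j → j ≤ M → iter g ξ (q ξ) j ∈ X)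
    (hcontr : ∀ ξ ∈ X, V (iter g ξ (q ξ) M) ≤ α (V ξ))
    (hcost : ClassKDominated X (fun ξ => ∑ i ∈ Finset.range M, V (iter g ξ (q ξ) i)) ω) :
    IsAfcl ω X U g M q := by
  refine ⟨hU, hX, fun j hj hjM => ?_⟩
  suffices hV : ClassKDominated X (fun ξ => V (iter g ξ (q ξ) j)) ω from
    (hlow.comp_mapsTo fun ξ hξ => hX ξ hξ j hj hjM).trans hV
  rcases hjM.lt_or_eq with hlt | rfl
  · refine .trans (.of_le fun ξ _ => ?_) hcost
    exact Finset.single_le_sum (f := fun i => V (iter g ξ (q ξ) i)) (fun _ _ => zero_le)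
      (Finset.mem_range.2 hlt)
  · exact .trans ⟨α, hα, hcontr⟩ hup

theorem exists_classKL_closedLoop_le (hM : 1 ≤ M) (hq : IsAfcl ω X U g M q)
    (hlow : ClassKDominated X ω V) (hup : ClassKDominated X V ω)
    (hα : ClassK α) (hαlt : ∀ s, 0 < s → α s < s)
    (hcontr : ∀ ξ ∈ X, V (iter g ξ (q ξ) M) ≤ α (V ξ)) :
    ∃ β, ClassKL β ∧ ∀ ξ ∈ X, ∀ t : ℕ, ω (closedLoop g M q ξ t) ≤ β (ω ξ) t := by
  obtain ⟨κ, hκ, hiter⟩ := hq.exists_classK_forall_iter_le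
  obtain ⟨η, hη, hω⟩ := hlow
  obtain ⟨υ, hυ, hV⟩ := hup
  have hκη := hκ.comp hη
  have hX : ∀ ξ ∈ X, iter g ξ (q ξ) M ∈ X := fun _ => hq.iter_mem le_rfl
  have hanti : ∀ r, Antitone fun t => (κ ∘ η) (α^[t / M] (υ r)) := fun r _ _ h =>
    hκη.2.1.monotone
      (Function.antitone_iterate_of_le_id (hα.le_id_of_lt_self hαlt) (Nat.div_le_div_right h) _)
  have hlim : ∀ r, Tendsto (fun t => (κ ∘ η) (α^[t / M] (υ r))) atTop (nhds 0) := fun r =>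
    hκη.tendsto_comp_zero
      ((hα.tendsto_iterate_zero hαlt _).comp (Nat.tendsto_div_const_atTop (by omega)))
  obtain ⟨β, hβ, hβ_nat⟩ := exists_classKL_natCast_eq
    (fun t => hκη.comp ((hα.iterate (t / M)).comp hυ)) hanti hlim
  refine ⟨β, hβ, fun ξ hξ t => ?_⟩
  have hbase := loopBase_mem hX hξ (t / M)
  calc ω (closedLoop g M q ξ t)
      ≤ κ (ω (loopBase g M q ξ (t / M))) := hiter _ hbase _ (Nat.mod_lt t hM)
    _ ≤ κ (η (V (loopBase g M q ξ (t / M)))) := hκ.2.1.monotone (hω _ hbase)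
    _ ≤ κ (η (α^[t / M] (V ξ))) :=
      hκη.2.1.monotone (apply_loopBase_le_iterate hα.2.1.monotone hX hcontr hξ _)
    _ ≤ κ (η (α^[t / M] (υ (ω ξ)))) :=
      hκη.2.1.monotone ((hα.iterate _).2.1.monotone (hV ξ hξ))
    _ = β (ω ξ) t := (hβ_nat _ t).symm

end IsAfcl

theorem contractive_multistep_mpc_stabilizes_general (hM : 1 ≤ M)
    (hlow : ClassKDominated X ω V) (hup : ClassKDominated X V ω) (hq : IsAfcl ω X U g M q)
    (hα : ClassK α) (hαlt : ∀ s, 0 < s → α s < s) {qhat : (Fin n → ℝ) → ℕ → Fin m → ℝ}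
    (hqhatU : ∀ ξ ∈ X, ∀ j < M, qhat ξ j ∈ U)
    (hqhatX : ∀ ξ ∈ X, ∀ j : ℕ, 1 ≤ j → j ≤ M → iter g ξ (qhat ξ) j ∈ X)
    (hqhatcontr : ∀ ξ ∈ X, V (iter g ξ (qhat ξ) M) ≤ α (V ξ))
    (hqhatcost : ∀ ξ ∈ X,
      ∑ i ∈ Finset.range M, V (iter g ξ (qhat ξ) i) ≤
        ∑ i ∈ Finset.range M, V (iter g ξ (q ξ) i)) :
    IsAfcl ω X U g M qhat ∧
    ∃ β, ClassKL β ∧ ∀ ξ ∈ X, ∀ t : ℕ, ω (closedLoop g M qhat ξ t) ≤ β (ω ξ) t := by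
  have hafcl : IsAfcl ω X U g M qhat :=
    .of_classKDominated_cost hlow hup hα hqhatU hqhatX hqhatcontr
      (.trans (.of_le hqhatcost) (hq.classKDominated_cost hup))
  exact ⟨hafcl, hafcl.exists_classKL_closedLoop_le hM hlow hup hα hαlt hqhatcontr⟩

end ControlSystem

/-- Proposition: the multi-step MPC feedback `q̂` obtained from OCP-1 is an
admissible finite-step feedback control law and asymptotically ω-stabilizes `A = ω⁻¹(0)`. -/
theorem contractive_multistep_mpc_stabilizes {n m : ℕ}
    (X : Set (Fin n → ℝ)) (U : Set (Fin m → ℝ))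
    (g : (Fin n → ℝ) → (Fin m → ℝ) → (Fin n → ℝ))
    (hg : ContinuousOn (fun p : (Fin n → ℝ) × (Fin m → ℝ) => g p.1 p.2) (X ×ˢ U))
    (ω : (Fin n → ℝ) → ℝ≥0) (hω : Continuous ω) (hωzero : ∃ x, ω x = 0)
    (M : ℕ) (hM : 1 ≤ M)
    (V : (Fin n → ℝ) → ℝ≥0) (hV : Continuous V)
    (ulα olα : ℝ≥0 → ℝ≥0) (hulα : ClassKInf ulα) (holα : ClassKInf olα)
    (hsandwich : ∀ ξ, ulα (ω ξ) ≤ V ξ ∧ V ξ ≤ olα (ω ξ))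
    (q : (Fin n → ℝ) → ℕ → Fin m → ℝ) (hq : IsAfcl ω X U g M q)
    (α : ℝ≥0 → ℝ≥0) (hα : ClassKInf α) (hαlt : ∀ s : ℝ≥0, 0 < s → α s < s)
    (hdecay : ∀ ξ ∈ X, V (iter g ξ (q ξ) M) ≤ α (V ξ))
    -- the feedback `q̂` satisfies the constraints of OCP-1 …
    (qhat : (Fin n → ℝ) → ℕ → Fin m → ℝ)
    (hqhatU : ∀ ξ ∈ X, ∀ j < M, qhat ξ j ∈ U)
    (hqhatX : ∀ ξ ∈ X, ∀ j : ℕ, 1 ≤ j → j ≤ M → iter g ξ (qhat ξ) j ∈ X)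
    (hqhatcontr : ∀ ξ ∈ X, V (iter g ξ (qhat ξ) M) ≤ α (V ξ))
    -- … and dominates the cost of `q`
    (hqhatcost : ∀ ξ ∈ X,
      ∑ i ∈ Finset.range M, V (iter g ξ (qhat ξ) i) ≤
        ∑ i ∈ Finset.range M, V (iter g ξ (q ξ) i)) :
    -- then `q̂` is an afcl and asymptotically ω-stabilizes `A := ω⁻¹(0)`:
    IsAfcl ω X U g M qhat ∧
    ∃ β : ℝ≥0 → ℝ≥0 → ℝ≥0, ClassKL β ∧
      ∀ ξ ∈ X, ∀ t : ℕ, ω (closedLoop g M qhat ξ t) ≤ β (ω ξ) (t : ℝ≥0) :=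
  contractive_multistep_mpc_stabilizes_general hM (hulα.classKDominated fun ξ _ => (hsandwich ξ).1)
    ⟨olα, holα.1, fun ξ _ => (hsandwich ξ).2⟩ hq hα.1 hαlt hqhatU hqhatX hqhatcontr hqhatcost
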